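/- Fix μ > 1 and define F : ℝ^(2N) → ℝ by F(Z) := ∫₀^{|Z|} ∫₀^{s} (1+r²)^(−μ/2) dr ds. Then F is of class C², there is a constant M > 0 with |∇F(Z)| ≤ M for all Z, and there are constants λ, Λ > 0 such that λ(1+|Z|)^(−μ)|Y|² ≤ D²F(Z)(Y,Y) ≤ Λ(1+|Z|)^(−1)|Y|² for all Y, Z ∈ ℝ^(2N). -/

import Mathlib

/-!
Write `F Z = G ‖Z‖` with `G'' = w`, where `w r = (1 + r²)^(-μ/2)`, and let `q t = G' t / t`,
extended by `q 0 = G'' 0`. Then `∇F Z = q ‖Z‖ Z`, and the Hessian of `F` at `Z` has the eigenvalue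
`w ‖Z‖` in the radial direction and `q ‖Z‖` in the tangential ones. By the mean value theorem
`q t = w c` for some `c ∈ [0, t]`, so that `w t ≤ q t ≤ 1` because `w` decreases; this gives the
lower bound, as `(1 + t)^(-μ) ≤ w t`. Since `μ > 1`, `w` is integrable, hence `‖∇F Z‖ = G' ‖Z‖` is
bounded by its integral `I`, and `(1 + t) q t = q t + G' t ≤ 1 + I` gives the upper bound.
-/

open Filter Topology Asymptotics Set MeasureTheory InnerProductSpace

section DividedSlope

variable {𝕜 V : Type*} [NontriviallyNormedField 𝕜] [NormedAddCommGroup V] [NormedSpace 𝕜 V]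

lemma continuous_dslope {g : 𝕜 → V} (hg : Differentiable 𝕜 g) (a : 𝕜) :
    Continuous (dslope g a) :=
  continuousOn_univ.1 <| (continuousOn_dslope univ_mem).2 ⟨hg.continuous.continuousOn, hg a⟩

lemma hasDerivAt_dslope_of_ne {g : 𝕜 → V} {g' : V} {a b : 𝕜} (hg : HasDerivAt g g' b)
    (hb : b ≠ a) : HasDerivAt (dslope g a) ((b - a)⁻¹ • (g' - dslope g a b)) b := by
  have hba : b - a ≠ 0 := sub_ne_zero.2 hb
  have hinv : HasDerivAt (fun t => (t - a)⁻¹) (-1 / (b - a) ^ 2) b :=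
    ((hasDerivAt_id b).sub_const a).inv hba
  refine ((hinv.smul (hg.sub_const (g a))).congr_of_eventuallyEq
    (dslope_eventuallyEq_slope_of_ne g hb)).congr_deriv ?_
  rw [dslope_of_ne g hb, slope_def_module]
  match_scalars <;> field_simp

lemma exists_deriv_eq_dslope {g : ℝ → ℝ} {a b : ℝ} (hab : a ≤ b)
    (hgc : ContinuousOn g (Icc a b)) (hgd : DifferentiableOn ℝ g (Ioo a b)) :
    ∃ c ∈ Icc a b, deriv g c = dslope g a b := by
  rcases hab.eq_or_lt with rfl | hlt
  · exact ⟨a, left_mem_Icc.2 le_rfl, (dslope_same g a).symm⟩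
  · obtain ⟨c, hc, hslope⟩ := exists_deriv_eq_slope' g hlt hgc hgd
    exact ⟨c, Ioo_subset_Icc_self hc, by rw [hslope, dslope_of_ne g hlt.ne']⟩

lemma dslope_mem_Icc_of_antitoneOn_deriv {g : ℝ → ℝ} {a b : ℝ} (hab : a ≤ b)
    (hgc : ContinuousOn g (Icc a b)) (hgd : DifferentiableOn ℝ g (Ioo a b))
    (hanti : AntitoneOn (deriv g) (Icc a b)) :
    dslope g a b ∈ Icc (deriv g b) (deriv g a) := by
  obtain ⟨c, hc, hslope⟩ := exists_deriv_eq_dslope hab hgc hgd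
  rw [← hslope]
  exact ⟨hanti hc (right_mem_Icc.2 hab) hc.2, hanti (left_mem_Icc.2 hab) hc hc.1⟩

end DividedSlope

lemma contDiff_succ_primitive {V : Type*} [NormedAddCommGroup V] [NormedSpace ℝ V]
    [CompleteSpace V] {f : ℝ → V} {n : ℕ} (hf : ContDiff ℝ n f) (a : ℝ) :
    ContDiff ℝ (n + 1) fun t => ∫ s in a..t, f s := by
  have hderiv (t : ℝ) : HasDerivAt (fun t => ∫ s in a..t, f s) (f t) t :=
    (hf.continuous.integral_hasStrictDerivAt a t).hasDerivAt
  rw [contDiff_succ_iff_deriv, funext fun t => (hderiv t).deriv]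
  exact ⟨fun t => (hderiv t).differentiableAt, by simp, hf⟩

section Radial

variable {E : Type*} [NormedAddCommGroup E] [InnerProductSpace ℝ E]

/-- The radial vector field `Z ↦ g(‖Z‖) Z / ‖Z‖`, for a profile `g` with `g 0 = 0`. The quotient
`g t / t` is encoded as `dslope g 0 t`, whose value at `t = 0` is `deriv g 0`. -/
noncomputable def radialField (g : ℝ → ℝ) (Z : E) : E := dslope g 0 ‖Z‖ • Z

/-- The derivative at `Z` of the radial vector field with profile `g`. At `Z = 0` the second
summand vanishes, both by `0 / 0 = 0` and because `rankOne ℝ Z Z = 0`. -/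
noncomputable def radialJacobian (g : ℝ → ℝ) (Z : E) : E →L[ℝ] E :=
  dslope g 0 ‖Z‖ • ContinuousLinearMap.id ℝ E +
    ((deriv g ‖Z‖ - dslope g 0 ‖Z‖) / ‖Z‖ ^ 2) • rankOne ℝ Z Z

lemma norm_radialField {g : ℝ → ℝ} (g0 : g 0 = 0) (Z : E) : ‖radialField g Z‖ = |g ‖Z‖| := by
  have hmul : ‖Z‖ * dslope g 0 ‖Z‖ = g ‖Z‖ := by simpa using sub_smul_dslope_of_zero g0 ‖Z‖
  rw [radialField, norm_smul, ← hmul, abs_mul, abs_norm, Real.norm_eq_abs, mul_comm]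

lemma hasFDerivAt_norm {Z : E} (hZ : Z ≠ 0) :
    HasFDerivAt (fun X : E => ‖X‖) (‖Z‖⁻¹ • innerSL ℝ Z) Z := by
  have hsqrt := (hasStrictFDerivAt_norm_sq Z).hasFDerivAt.sqrt (by simpa using hZ)
  simp only [Real.sqrt_sq (norm_nonneg _)] at hsqrt
  refine hsqrt.congr_fderiv ?_
  ext Y
  simp only [one_div, mul_inv_rev, smul_apply, coe_innerSL_apply, nsmul_eq_mul, Nat.cast_ofNat,
    smul_eq_mul]
  field_simp

lemma hasFDerivAt_comp_norm {G g : ℝ → ℝ} (g0 : g 0 = 0) {Z : E}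
    (hG : HasDerivAt G (g ‖Z‖) ‖Z‖) :
    HasFDerivAt (fun X : E => G ‖X‖) (innerSL ℝ (radialField g Z)) Z := by
  rcases eq_or_ne Z 0 with rfl | hZ
  · have hlittleO : (fun X : E => G ‖X‖ - G 0) =o[𝓝 0] fun X : E => ‖X‖ := by
      simpa [g0, Function.comp_def] using
        hG.isLittleO.comp_tendsto (continuous_norm.tendsto (0 : E))
    refine HasFDerivAt.of_isLittleO ?_
    simpa [radialField] using hlittleO.of_norm_right
  · refine (hG.comp_hasFDerivAt Z (hasFDerivAt_norm hZ)).congr_fderiv ?_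
    have hne : ‖Z‖ ≠ 0 := norm_ne_zero_iff.2 hZ
    rw [smul_smul, radialField, dslope_of_ne g hne, slope_def_field, g0, sub_zero, sub_zero,
      div_eq_mul_inv]
    simp

lemma hasFDerivAt_radialField {g : ℝ → ℝ} {Z : E} (hg : DifferentiableAt ℝ g ‖Z‖) :
    HasFDerivAt (radialField g) (radialJacobian g Z) Z := by
  rcases eq_or_ne Z 0 with rfl | hZ
  · rw [norm_zero] at hg
    have hlim : Tendsto (fun X : E => dslope g 0 ‖X‖ - dslope g 0 0) (𝓝 0) (𝓝 0) := by
      have hdslope : Tendsto (dslope g 0) (𝓝 0) (𝓝 (dslope g 0 0)) :=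
        (continuousAt_dslope_same (f := g)).2 hg
      simpa using (hdslope.comp tendsto_norm_zero).sub_const (dslope g 0 0)
    refine HasFDerivAt.of_isLittleO ?_
    have hlittleO := ((isLittleO_one_iff ℝ).2 hlim).smul_isBigO
      (isBigO_refl (fun X : E => X) (𝓝 0))
    simpa [radialField, radialJacobian, sub_smul] using hlittleO
  · have hne : ‖Z‖ ≠ 0 := norm_ne_zero_iff.2 hZ
    have hdslope := hasDerivAt_dslope_of_ne hg.hasDerivAt hne
    refine ((hdslope.comp_hasFDerivAt Z (hasFDerivAt_norm hZ)).smul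
      (hasFDerivAt_id Z)).congr_fderiv ?_
    ext Y
    simp only [radialJacobian, Function.comp_apply, sub_zero, smul_eq_mul, smul_smul, id_eq,
      add_apply, smul_apply, ContinuousLinearMap.id_apply, ContinuousLinearMap.smulRight_apply,
      coe_innerSL_apply, rankOne_apply, add_right_inj]
    field_simp

lemma continuous_radialJacobian {g : ℝ → ℝ} (hg : ContDiff ℝ 1 g) :
    Continuous (radialJacobian g : E → E →L[ℝ] E) := by
  have hq : Continuous fun Z : E => dslope g 0 ‖Z‖ :=
    (continuous_dslope (hg.differentiable one_ne_zero) 0).comp continuous_norm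
  have hdiff : Continuous fun Z : E => deriv g ‖Z‖ - dslope g 0 ‖Z‖ :=
    (hg.continuous_deriv_one.comp continuous_norm).sub hq
  refine (hq.smul continuous_const).add (continuous_iff_continuousAt.2 fun Z => ?_)
  rcases eq_or_ne Z 0 with rfl | hZ
  · have hlim : Tendsto (fun Z : E => |deriv g ‖Z‖ - dslope g 0 ‖Z‖|) (𝓝 0) (𝓝 0) := by
      simpa using (hdiff.tendsto 0).abs
    rw [ContinuousAt, map_zero, smul_zero]
    refine squeeze_zero_norm (fun Z => ?_) hlim
    rw [norm_smul, norm_rankOne, norm_div, norm_pow, norm_norm, ← sq, Real.norm_eq_abs,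
      div_mul_eq_mul_div]
    exact div_le_of_le_mul₀ (by positivity) (by positivity) le_rfl
  · refine (hdiff.continuousAt.div (continuous_norm.pow 2).continuousAt
      (pow_ne_zero 2 (norm_ne_zero_iff.2 hZ))).smul ?_
    exact ((rankOne ℝ).continuous.clm_apply continuous_id).continuousAt

lemma contDiff_one_radialField {g : ℝ → ℝ} (hg : ContDiff ℝ 1 g) :
    ContDiff ℝ 1 (radialField g : E → E) := by
  have hderiv (Z : E) := hasFDerivAt_radialField (hg.differentiable one_ne_zero ‖Z‖)
  rw [contDiff_one_iff_fderiv, funext fun Z => (hderiv Z).fderiv]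
  exact ⟨fun Z => (hderiv Z).differentiableAt, continuous_radialJacobian hg⟩

lemma fderiv_comp_norm {G : ℝ → ℝ} (hG : Differentiable ℝ G) (hG0 : deriv G 0 = 0) :
    fderiv ℝ (fun Z : E => G ‖Z‖) = fun Z => innerSL ℝ (radialField (deriv G) Z) :=
  funext fun Z => (hasFDerivAt_comp_norm hG0 (hG ‖Z‖).hasDerivAt).fderiv

lemma contDiff_two_comp_norm {G : ℝ → ℝ} (hG : ContDiff ℝ 2 G) (hG0 : deriv G 0 = 0) :
    ContDiff ℝ 2 fun Z : E => G ‖Z‖ := by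
  have hGd : Differentiable ℝ G := hG.differentiable two_ne_zero
  rw [← one_add_one_eq_two, contDiff_succ_iff_fderiv]
  refine ⟨fun Z => (hasFDerivAt_comp_norm hG0 (hGd ‖Z‖).hasDerivAt).differentiableAt, by simp, ?_⟩
  rw [fderiv_comp_norm hGd hG0]
  exact (innerSL ℝ : E →L[ℝ] E →L[ℝ] ℝ).contDiff.comp (contDiff_one_radialField hG.deriv')

lemma iteratedFDeriv_two_comp_norm {G : ℝ → ℝ} (hG : ContDiff ℝ 2 G) (hG0 : deriv G 0 = 0)
    (Z X Y : E) :
    iteratedFDeriv ℝ 2 (fun Z : E => G ‖Z‖) Z ![X, Y] =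
      inner ℝ (radialJacobian (deriv G) Z X) Y := by
  have hfield := hasFDerivAt_radialField (Z := Z) (hG.differentiable_deriv_two ‖Z‖)
  have hgrad : HasFDerivAt (fun Z : E => innerSL ℝ (radialField (deriv G) Z))
      ((innerSL ℝ : E →L[ℝ] E →L[ℝ] ℝ) ∘L radialJacobian (deriv G) Z) Z :=
    (innerSL ℝ : E →L[ℝ] E →L[ℝ] ℝ).hasFDerivAt.comp Z hfield
  rw [iteratedFDeriv_two_apply, fderiv_comp_norm (hG.differentiable two_ne_zero) hG0, hgrad.fderiv]
  rfl

lemma inner_radialJacobian_self_mem_Icc {g : ℝ → ℝ} {Z : E}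
    (hle : deriv g ‖Z‖ ≤ dslope g 0 ‖Z‖) (Y : E) :
    inner ℝ (radialJacobian g Z Y) Y ∈
      Icc (deriv g ‖Z‖ * ‖Y‖ ^ 2) (dslope g 0 ‖Z‖ * ‖Y‖ ^ 2) := by
  have hexpand : inner ℝ (radialJacobian g Z Y) Y = dslope g 0 ‖Z‖ * ‖Y‖ ^ 2 -
      (dslope g 0 ‖Z‖ - deriv g ‖Z‖) * (inner ℝ Z Y ^ 2 / ‖Z‖ ^ 2) := by
    simp only [radialJacobian, add_apply, smul_apply, ContinuousLinearMap.id_apply, rankOne_apply,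
      inner_add_left, real_inner_smul_left, real_inner_self_eq_norm_sq]
    ring
  have hcauchySchwarz : inner ℝ Z Y ^ 2 / ‖Z‖ ^ 2 ≤ ‖Y‖ ^ 2 := by
    refine div_le_of_le_mul₀ (by positivity) (by positivity) ?_
    rw [← mul_pow, mul_comm ‖Y‖, sq_le_sq, abs_of_nonneg (a := ‖Z‖ * ‖Y‖) (by positivity)]
    exact abs_real_inner_le_norm Z Y
  have hradial_nonneg : 0 ≤ inner ℝ Z Y ^ 2 / ‖Z‖ ^ 2 := by positivity
  rw [hexpand]
  constructor <;> nlinarith [sub_nonneg.2 hle]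

end Radial

section Profile

/-- The weight `(1 + r²)^(-μ/2)`, the second derivative of the profile of the density. -/
noncomputable def bracketWeight (μ r : ℝ) : ℝ := (1 + r ^ 2) ^ (-μ / 2)

/-- The primitive of `bracketWeight μ` vanishing at `0`, the first derivative of the profile of the
density. -/
noncomputable def slopeProfile (μ s : ℝ) : ℝ := ∫ r in (0 : ℝ)..s, bracketWeight μ r

/-- The profile of the density: `F Z = densityProfile μ ‖Z‖`. -/
noncomputable def densityProfile (μ t : ℝ) : ℝ := ∫ s in (0 : ℝ)..t, slopeProfile μ s

variable {μ t : ℝ}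

lemma bracketWeight_pos (μ r : ℝ) : 0 < bracketWeight μ r := by
  unfold bracketWeight
  positivity

lemma continuous_bracketWeight (μ : ℝ) : Continuous (bracketWeight μ) :=
  Continuous.rpow_const (by fun_prop) fun r => Or.inl (by positivity)

lemma bracketWeight_zero (μ : ℝ) : bracketWeight μ 0 = 1 := by simp [bracketWeight]

lemma antitoneOn_bracketWeight (hμ : 0 ≤ μ) : AntitoneOn (bracketWeight μ) (Ici 0) :=
  fun r (hr : 0 ≤ r) s _ hrs => by
    exact Real.rpow_le_rpow_of_nonpos (by positivity) (by gcongr) (by linarith)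

lemma integrable_bracketWeight (hμ : 1 < μ) : Integrable (bracketWeight μ) := by
  unfold bracketWeight
  simpa only [Real.norm_eq_abs, sq_abs] using
    integrable_rpow_neg_one_add_norm_sq (E := ℝ) (μ := volume) (r := μ) (by simpa using hμ)

lemma one_add_rpow_neg_le_bracketWeight (hμ : 0 ≤ μ) (ht : 0 ≤ t) :
    (1 + t) ^ (-μ) ≤ bracketWeight μ t :=
  calc (1 + t) ^ (-μ) = ((1 + t) ^ 2) ^ (-μ / 2) := by
        rw [← Real.rpow_natCast_mul (by positivity)]
        congr 1
        push_cast
        ring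
    _ ≤ bracketWeight μ t :=
        Real.rpow_le_rpow_of_nonpos (by positivity) (by nlinarith) (by linarith)

lemma slopeProfile_zero (μ : ℝ) : slopeProfile μ 0 = 0 := intervalIntegral.integral_same

lemma deriv_slopeProfile (μ : ℝ) : deriv (slopeProfile μ) = bracketWeight μ :=
  funext <| (continuous_bracketWeight μ).deriv_integral _ 0

lemma contDiff_one_slopeProfile (μ : ℝ) : ContDiff ℝ 1 (slopeProfile μ) := by
  unfold slopeProfile
  simpa using contDiff_succ_primitive (n := 0) (contDiff_zero.2 (continuous_bracketWeight μ)) 0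

lemma deriv_densityProfile (μ : ℝ) : deriv (densityProfile μ) = slopeProfile μ :=
  funext <| (contDiff_one_slopeProfile μ).continuous.deriv_integral _ 0

lemma deriv_densityProfile_zero (μ : ℝ) : deriv (densityProfile μ) 0 = 0 := by
  rw [deriv_densityProfile, slopeProfile_zero]

lemma contDiff_two_densityProfile (μ : ℝ) : ContDiff ℝ 2 (densityProfile μ) := by
  unfold densityProfile
  simpa [one_add_one_eq_two] using
    contDiff_succ_primitive (n := 1) (contDiff_one_slopeProfile μ) 0

lemma slopeProfile_nonneg (μ : ℝ) (ht : 0 ≤ t) : 0 ≤ slopeProfile μ t :=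
  intervalIntegral.integral_nonneg ht fun r _ => (bracketWeight_pos μ r).le

lemma slopeProfile_le_integral (hμ : 1 < μ) (ht : 0 ≤ t) :
    slopeProfile μ t ≤ ∫ r, bracketWeight μ r := by
  rw [slopeProfile, intervalIntegral.integral_of_le ht]
  exact setIntegral_le_integral (integrable_bracketWeight hμ)
    (Eventually.of_forall fun r => (bracketWeight_pos μ r).le)

lemma dslope_slopeProfile_mem_Icc (hμ : 0 ≤ μ) (ht : 0 ≤ t) :
    dslope (slopeProfile μ) 0 t ∈ Icc (bracketWeight μ t) 1 := by
  have hsmooth := contDiff_one_slopeProfile μ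
  have hanti : AntitoneOn (deriv (slopeProfile μ)) (Icc 0 t) := by
    rw [deriv_slopeProfile]
    exact (antitoneOn_bracketWeight hμ).mono Icc_subset_Ici_self
  simpa only [deriv_slopeProfile, bracketWeight_zero] using
    dslope_mem_Icc_of_antitoneOn_deriv ht hsmooth.continuous.continuousOn
      (hsmooth.differentiable one_ne_zero).differentiableOn hanti

lemma dslope_slopeProfile_le (hμ : 1 < μ) (ht : 0 ≤ t) :
    dslope (slopeProfile μ) 0 t ≤ (1 + ∫ r, bracketWeight μ r) * (1 + t)⁻¹ := by
  have hmul : t * dslope (slopeProfile μ) 0 t = slopeProfile μ t := by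
    simpa using sub_smul_dslope_of_zero (slopeProfile_zero μ) t
  rw [← div_eq_mul_inv, le_div_iff₀ (by positivity)]
  linarith [(dslope_slopeProfile_mem_Icc (zero_le_one.trans hμ.le) ht).2,
    slopeProfile_le_integral hμ ht]

end Profile

section Density

variable {E : Type*} [NormedAddCommGroup E] [InnerProductSpace ℝ E]

lemma contDiff_two_densityProfile_norm (μ : ℝ) :
    ContDiff ℝ 2 fun Z : E => densityProfile μ ‖Z‖ :=
  contDiff_two_comp_norm (contDiff_two_densityProfile μ) (deriv_densityProfile_zero μ)

lemma norm_fderiv_densityProfile_norm_le {μ : ℝ} (hμ : 1 < μ) (Z : E) :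
    ‖fderiv ℝ (fun Z : E => densityProfile μ ‖Z‖) Z‖ ≤ ∫ r, bracketWeight μ r := by
  rw [fderiv_comp_norm ((contDiff_two_densityProfile μ).differentiable two_ne_zero)
      (deriv_densityProfile_zero μ),
    innerSL_apply_norm, deriv_densityProfile, norm_radialField (slopeProfile_zero μ),
    abs_of_nonneg (slopeProfile_nonneg μ (norm_nonneg Z))]
  exact slopeProfile_le_integral hμ (norm_nonneg Z)

lemma iteratedFDeriv_two_densityProfile_norm_mem_Icc {μ : ℝ} (hμ : 0 ≤ μ) (Z Y : E) :
    iteratedFDeriv ℝ 2 (fun Z : E => densityProfile μ ‖Z‖) Z ![Y, Y] ∈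
      Icc (bracketWeight μ ‖Z‖ * ‖Y‖ ^ 2) (dslope (slopeProfile μ) 0 ‖Z‖ * ‖Y‖ ^ 2) := by
  rw [iteratedFDeriv_two_comp_norm (contDiff_two_densityProfile μ) (deriv_densityProfile_zero μ),
    deriv_densityProfile, ← deriv_slopeProfile]
  refine inner_radialJacobian_self_mem_Icc ?_ Y
  rw [deriv_slopeProfile]
  exact (dslope_slopeProfile_mem_Icc hμ (norm_nonneg Z)).1

theorem statement8_general (μ : ℝ) (hμ : 1 < μ) (F : E → ℝ)
    (hFdef : ∀ Z, F Z = ∫ s in (0 : ℝ)..‖Z‖, ∫ r in (0 : ℝ)..s, (1 + r ^ 2) ^ (-μ / 2)) :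
    ContDiff ℝ 2 F ∧
    (∃ M : ℝ, 0 < M ∧ ∀ Z, ‖fderiv ℝ F Z‖ ≤ M) ∧
    (∃ lam Lam : ℝ, 0 < lam ∧ 0 < Lam ∧
      ∀ Z Y : E,
        lam * (1 + ‖Z‖) ^ (-μ) * ‖Y‖ ^ 2 ≤ iteratedFDeriv ℝ 2 F Z ![Y, Y] ∧
        iteratedFDeriv ℝ 2 F Z ![Y, Y] ≤ Lam * (1 + ‖Z‖)⁻¹ * ‖Y‖ ^ 2) := by
  obtain rfl : F = fun Z => densityProfile μ ‖Z‖ := funext hFdef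
  have hint : 0 ≤ ∫ r, bracketWeight μ r := integral_nonneg fun r => (bracketWeight_pos μ r).le
  have hhess := iteratedFDeriv_two_densityProfile_norm_mem_Icc (E := E) (zero_le_one.trans hμ.le)
  refine ⟨contDiff_two_densityProfile_norm μ, ⟨1 + ∫ r, bracketWeight μ r, by linarith,
      fun Z => (norm_fderiv_densityProfile_norm_le hμ Z).trans (by linarith)⟩,
    1, 1 + ∫ r, bracketWeight μ r, one_pos, by linarith,
    fun Z Y => ⟨le_trans ?_ (hhess Z Y).1, (hhess Z Y).2.trans ?_⟩⟩
  · rw [one_mul]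
    gcongr
    exact one_add_rpow_neg_le_bracketWeight (zero_le_one.trans hμ.le) (norm_nonneg Z)
  · gcongr
    exact dslope_slopeProfile_le hμ (norm_nonneg Z)

end Density

/-- for `μ > 1`, the density
`F(Z) = ∫₀^{|Z|} ∫₀^s (1+r²)^{−μ/2} dr ds` on `ℝ^{2N}` is `C²`, has bounded gradient and
is `μ`-elliptic: `λ(1+|Z|)^{−μ}|Y|² ≤ D²F(Z)(Y,Y) ≤ Λ(1+|Z|)^{−1}|Y|²`. -/
theorem statement8 {N : ℕ} (μ : ℝ) (hμ : 1 < μ)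
    (F : EuclideanSpace ℝ (Fin N × Fin 2) → ℝ)
    (hFdef : ∀ Z, F Z = ∫ s in (0:ℝ)..‖Z‖, ∫ r in (0:ℝ)..s, (1 + r ^ 2) ^ (-μ / 2)) :
    ContDiff ℝ 2 F ∧
    (∃ M : ℝ, 0 < M ∧ ∀ Z, ‖gradient F Z‖ ≤ M) ∧
    (∃ lam Lam : ℝ, 0 < lam ∧ 0 < Lam ∧
      ∀ Z Y : EuclideanSpace ℝ (Fin N × Fin 2),
        lam * (1 + ‖Z‖) ^ (-μ) * ‖Y‖ ^ 2 ≤ iteratedFDeriv ℝ 2 F Z ![Y, Y] ∧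
        iteratedFDeriv ℝ 2 F Z ![Y, Y] ≤ Lam * (1 + ‖Z‖)⁻¹ * ‖Y‖ ^ 2) := by
  simpa only [gradient, LinearIsometryEquiv.norm_map] using statement8_general μ hμ F hFdef
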